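/- (Plotkin bound for EAQEC codes.) Let n, k, c, d be integers with n ≥ 1, k ≥ 1, c ≥ 0 and k + c ≤ n. Suppose S ⊆ V_n is an F₂-subspace with dim S = n−k+c and dim(S ∩ S^⊥) = n−k−c, and suppose every element of S^⊥ \ (S ∩ S^⊥) has Pauli weight at least d. Then, with M = 2^{2k}, we have 4·(M−1)·d ≤ 3·n·M. -/

import Mathlib

open Finset

/-- The binary symplectic space modelling `n`-qubit Pauli operators modulo phases. -/
abbrev V (n : ℕ) := (Fin n → ZMod 2) × (Fin n → ZMod 2)

/-- The Pauli weight of `v = (x, z)`: the number of indices where `(x i, z i) ≠ (0,0)`. -/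
def wt {n : ℕ} (v : V n) : ℕ :=
  (Finset.univ.filter fun i => ¬(v.1 i = 0 ∧ v.2 i = 0)).card

/-- The binary symplectic product. -/
def sympl {n : ℕ} (u v : V n) : ZMod 2 :=
  ∑ i, (u.1 i * v.2 i + u.2 i * v.1 i)

lemma sympl_add_left {n : ℕ} (a b w : V n) :
    sympl (a + b) w = sympl a w + sympl b w := by
  simp only [sympl, Prod.fst_add, Prod.snd_add, Pi.add_apply, ← Finset.sum_add_distrib]
  exact Finset.sum_congr rfl fun i _ => by ring

lemma sympl_smul_left {n : ℕ} (c : ZMod 2) (a w : V n) :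
    sympl (c • a) w = c * sympl a w := by
  simp only [sympl, Prod.smul_fst, Prod.smul_snd, Pi.smul_apply, smul_eq_mul,
    Finset.mul_sum]
  exact Finset.sum_congr rfl fun i _ => by ring

/-- The symplectic dual `W^⊥` of a subspace `W ⊆ V n`. -/
def sdual {n : ℕ} (W : Submodule (ZMod 2) (V n)) : Submodule (ZMod 2) (V n) where
  carrier := {u | ∀ w ∈ W, sympl u w = 0}
  add_mem' := fun ha hb w hw => by
    rw [sympl_add_left, ha w hw, hb w hw, add_zero]
  zero_mem' := fun w hw => by simp [sympl]
  smul_mem' := fun c a ha w hw => by rw [sympl_smul_left, ha w hw, mul_zero]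

open scoped Classical

lemma sympl_comm {n : ℕ} (a b : V n) : sympl a b = sympl b a := by
  simp only [sympl]
  exact Finset.sum_congr rfl fun i _ => by ring

/-- The symplectic pairing with a subspace. -/
noncomputable def pairing {n : ℕ} (S : Submodule (ZMod 2) (V n)) :
    V n →ₗ[ZMod 2] (S →ₗ[ZMod 2] ZMod 2) :=
  LinearMap.mk₂ (ZMod 2) (fun u (w : S) => sympl u (w : V n))
    (fun a b w => sympl_add_left a b w)
    (fun c a w => by simp [sympl_smul_left])
    (fun a b w => by
      rw [sympl_comm a, sympl_comm a, sympl_comm a, Submodule.coe_add, sympl_add_left])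
    (fun c a w => by
      rw [sympl_comm a, sympl_comm a, Submodule.coe_smul, sympl_smul_left, smul_eq_mul])

lemma ker_pairing {n : ℕ} (S : Submodule (ZMod 2) (V n)) :
    LinearMap.ker (pairing S) = sdual S := by
  ext u
  rw [LinearMap.mem_ker]
  constructor
  · intro h w hw
    exact LinearMap.congr_fun h ⟨w, hw⟩
  · intro h
    ext w
    exact h w w.2

lemma finrank_sdual {n : ℕ} (S : Submodule (ZMod 2) (V n)) :
    2 * n ≤ Module.finrank (ZMod 2) (sdual S) + Module.finrank (ZMod 2) S := by
  have h := LinearMap.finrank_range_add_finrank_ker (pairing S)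
  rw [ker_pairing] at h
  have h1 : Module.finrank (ZMod 2) (V n) = 2 * n := by
    simp [V, Module.finrank_prod, two_mul]
  have h2 := Submodule.finrank_le (LinearMap.range (pairing S))
  have h3 : Module.finrank (ZMod 2) (S →ₗ[ZMod 2] ZMod 2) = Module.finrank (ZMod 2) S :=
    Subspace.dual_finrank_eq
  omega

/-- Evaluation of a Pauli at a site. -/
def site {n : ℕ} (i : Fin n) : V n →ₗ[ZMod 2] (ZMod 2 × ZMod 2) :=
  (LinearMap.proj i).prodMap (LinearMap.proj i)

lemma card_sub {n : ℕ} (C : Submodule (ZMod 2) (V n)) :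
    (univ.filter fun v : V n => v ∈ C).card = 2 ^ Module.finrank (ZMod 2) C := by
  have := Module.card_eq_pow_finrank (K := ZMod 2) (V := C)
  rw [ZMod.card] at this
  rw [← this, Fintype.card_subtype]

lemma site_card {n : ℕ} (C : Submodule (ZMod 2) (V n)) (i : Fin n) :
    4 * (univ.filter fun v : V n => v ∈ C ∧ ¬(v.1 i = 0 ∧ v.2 i = 0)).card
      ≤ 3 * (univ.filter fun v : V n => v ∈ C).card := by
  have h := LinearMap.finrank_range_add_finrank_ker ((site i).domRestrict C)
  have h2 := Submodule.finrank_le (LinearMap.range ((site i).domRestrict C))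
  have h3 : Module.finrank (ZMod 2) (ZMod 2 × ZMod 2) = 2 := by simp
  have h4 : Module.finrank (ZMod 2) (LinearMap.ker ((site i).domRestrict C)) =
      Module.finrank (ZMod 2) (C ⊓ LinearMap.ker (site i) : Submodule (ZMod 2) (V n)) := by
    rw [← Submodule.map_comap_subtype]
    exact (LinearEquiv.finrank_eq (Submodule.equivMapOfInjective C.subtype
      C.injective_subtype _))
  have h5 : (2 : ℕ) ^ Module.finrank (ZMod 2) C ≤
      2 ^ (2 + Module.finrank (ZMod 2) (C ⊓ LinearMap.ker (site i) : Submodule (ZMod 2) (V n))) :=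
    Nat.pow_le_pow_right (by norm_num) (by omega)
  rw [pow_add, ← card_sub, ← card_sub] at h5
  have h6 : (univ.filter fun v : V n => v ∈ (C ⊓ LinearMap.ker (site i) : Submodule (ZMod 2) (V n)))
      = univ.filter fun v : V n => v ∈ C ∧ (v.1 i = 0 ∧ v.2 i = 0) := by
    ext v
    simp [site, Submodule.mem_inf]
  rw [h6] at h5
  have h7 := Finset.card_filter_add_card_filter_not
    (s := univ.filter fun v : V n => v ∈ C) (fun v : V n => v.1 i = 0 ∧ v.2 i = 0)
  rw [Finset.filter_filter, Finset.filter_filter] at h7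
  omega

lemma sum_wt {n : ℕ} (C : Submodule (ZMod 2) (V n)) :
    4 * ∑ v ∈ univ.filter (fun v : V n => v ∈ C), wt v
      ≤ 3 * n * (univ.filter fun v : V n => v ∈ C).card := by
  have h : ∑ v ∈ univ.filter (fun v : V n => v ∈ C), wt v =
      ∑ i : Fin n, (univ.filter fun v : V n => v ∈ C ∧ ¬(v.1 i = 0 ∧ v.2 i = 0)).card := by
    simp only [wt, Finset.card_filter _ (univ : Finset (Fin n))]
    rw [Finset.sum_comm]
    refine Finset.sum_congr rfl fun i _ => ?_
    rw [← Finset.filter_filter, Finset.card_filter]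
  rw [h, Finset.mul_sum]
  refine (Finset.sum_le_sum fun i _ => site_card C i).trans ?_
  simp only [Finset.sum_const, Finset.card_univ, Fintype.card_fin, smul_eq_mul]
  exact le_of_eq (by ring)

/-- Plotkin bound for EAQEC codes: for an `[[n,k,d;c]]` EAQEC code,
with `M = 2^{2k}`, we have `4(M−1)d ≤ 3nM`. -/
theorem EAQEC_plotkin_bound (n k c d : ℕ) (hn : 1 ≤ n) (hk : 1 ≤ k)
    (hkc : k + c ≤ n)
    (S : Submodule (ZMod 2) (V n))
    (hdim : Module.finrank (ZMod 2) S + k = n + c)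
    (hrad : Module.finrank (ZMod 2) (S ⊓ sdual S : Submodule (ZMod 2) (V n)) + k + c = n)
    (hdist : ∀ v ∈ sdual S, v ∉ (S ⊓ sdual S : Submodule (ZMod 2) (V n)) → d ≤ wt v) :
    4 * (2 ^ (2 * k) - 1) * d ≤ 3 * n * 2 ^ (2 * k) := by
  set R : Submodule (ZMod 2) (V n) := S ⊓ sdual S with hR
  have hRC : R ≤ sdual S := inf_le_right
  have hs := finrank_sdual S
  have hw := sum_wt (sdual S)
  have hcard : (2 : ℕ) ^ (2 * k) * 2 ^ Module.finrank (ZMod 2) R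
      ≤ 2 ^ Module.finrank (ZMod 2) (sdual S) := by
    rw [← pow_add]
    exact Nat.pow_le_pow_right (by norm_num) (by omega)
  have h7 := Finset.card_filter_add_card_filter_not
    (s := univ.filter fun v : V n => v ∈ sdual S) (fun v : V n => v ∈ R)
  rw [Finset.filter_filter, Finset.filter_filter] at h7
  have h8 : (univ.filter fun v : V n => v ∈ sdual S ∧ v ∈ R) = univ.filter fun v : V n => v ∈ R := by
    ext v
    simp only [Finset.mem_filter, Finset.mem_univ, true_and]
    exact ⟨fun h => h.2, fun h => ⟨hRC h, h⟩⟩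
  rw [h8, card_sub, card_sub] at h7
  have h9 : (univ.filter fun v : V n => v ∈ sdual S ∧ v ∉ R).card * d
      ≤ ∑ v ∈ univ.filter (fun v : V n => v ∈ sdual S), wt v := by
    rw [← smul_eq_mul]
    refine (Finset.card_nsmul_le_sum _ wt d ?_).trans
      (Finset.sum_le_sum_of_subset fun v hv => ?_)
    · intro v hv
      simp only [Finset.mem_filter, Finset.mem_univ, true_and] at hv
      exact hdist v hv.1 hv.2
    · simp only [Finset.mem_filter, Finset.mem_univ, true_and] at hv ⊢
      exact hv.1
  rw [card_sub] at hw
  generalize (univ.filter fun v : V n => v ∈ sdual S ∧ v ∉ R).card = N at h7 h9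
  generalize ∑ v ∈ univ.filter (fun v : V n => v ∈ sdual S), wt v = T at h9 hw
  have hA : 0 < 2 ^ Module.finrank (ZMod 2) (sdual S) := by positivity
  have hM : 1 ≤ 2 ^ (2 * k) := Nat.one_le_two_pow
  generalize 2 ^ Module.finrank (ZMod 2) (sdual S) = A at *
  generalize 2 ^ Module.finrank (ZMod 2) R = B at *
  generalize 2 ^ (2 * k) = M at *
  obtain ⟨m, rfl⟩ := Nat.exists_eq_add_of_le hM
  rw [Nat.add_sub_cancel_left]
  have h10 : m * A ≤ (1 + m) * N := by
    subst h7
    nlinarith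
  refine Nat.le_of_mul_le_mul_right ?_ hA
  calc 4 * m * d * A = 4 * d * (m * A) := by ring
    _ ≤ 4 * d * ((1 + m) * N) := Nat.mul_le_mul_left _ h10
    _ = (1 + m) * (4 * (N * d)) := by ring
    _ ≤ (1 + m) * (3 * n * A) := Nat.mul_le_mul_left _ (by omega)
    _ = 3 * n * (1 + m) * A := by ring
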